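/- The map U (the μ-a.e. limit of the Chacon-type maps U_n) is weakly mixing: for all Borel sets A, B ⊆ T², lim_{n→∞} (1/n) ∑_{j=0}^{n−1} [μ(U^{−j}(A) ∩ B) − μ(A)μ(B)]² = 0. -/

import Mathlib

/-!
The limit map `U` is a rank-one transformation built by cutting and stacking. At stage `n` there is
a tower of `4 ^ n - 1` levels, which are all the dyadic squares of side `2⁻ⁿ` but one, and `U`
translates each level onto the next (`chaconU_level`, `cell_chaconU`). Stage `n + 1` runs twice
through the tower of stage `n`, then through a spacer, the tower, a spacer, the tower, and a spacer.
This is recorded abstractly in `ChaconTower` and proved for `U` in `chaconTower`.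

Weak mixing follows from ergodicity of `U × U` (`ChaconTower.ergodic_prod`). Let `E` be invariant
under `T × T`. The point is `off_diag`: with `h` the height of stage `n`, moving by `h` steps takes
the first quarter of level `i` to its second quarter, since no spacer separates the first two
passages, while it takes the second quarter of level `j + 1` to the third quarter of level `j`,
because of the spacer. Hence `E` cannot be nearly full in one of the rectangles `(i, j)`,
`(i, j + 1)` and nearly empty in the other. As `E` is nearly a union of such rectangles when `n` is
large, `E` is invariant under `id × T` (`inv_snd`), and therefore under `T × id`. Then all rectangles
of a stage carry the same mass of `E`, and approximation by unions of rectangles forces `E` to have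
measure zero or one (`zero_one`).

Finally, the mean ergodic theorem for `T × T` (`tendsto_average_inter`), applied to the pairs of sets
`(A × A, B × B)` and `(A × X, B × X)`, gives the limits of the averages of `μ (T⁻ʲ A ∩ B) ^ 2` and
`μ (T⁻ʲ A ∩ B)`, and expanding the square gives the claim.
-/

open MeasureTheory Filter Set

noncomputable section

instance fact01 : Fact ((0:ℝ) < 1) := ⟨one_pos⟩

/-- The two-dimensional torus `[0,1)²` with coordinatewise addition mod 1. -/
abbrev T2 : Type := AddCircle (1:ℝ) × AddCircle (1:ℝ)

/-- The canonical representative in `[0,1)` of a point of the circle. -/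
noncomputable def rep (x : AddCircle (1:ℝ)) : ℝ := ((AddCircle.equivIco 1 0) x : ℝ)

/-- The point of the torus with coordinates `a`, `b` (mod 1). -/
noncomputable def tv (a b : ℝ) : T2 := ((a : AddCircle (1:ℝ)), (b : AddCircle (1:ℝ)))

open Classical in
/-- The Chacon-type maps `U_n` on the torus. -/
noncomputable def chaconU : ℕ → T2 → T2
  | 0 => id
  | 1 => fun x =>
      if 0 ≤ rep x.1 ∧ rep x.1 < 1/2 ∧ 1/2 ≤ rep x.2 ∧ rep x.2 < 1 then x + tv (1/2) 0
      else if 1/2 ≤ rep x.1 ∧ rep x.1 < 1 ∧ 1/2 ≤ rep x.2 ∧ rep x.2 < 1 then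
        x + tv (-(1/2)) (-(1/2))
      else if 0 ≤ rep x.1 ∧ rep x.1 < 1/2 ∧ 0 ≤ rep x.2 ∧ rep x.2 < 1/2 then x + tv 0 (1/2)
      else x
  | (n+2) => fun x =>
      let s : ℝ := 1 / 2 ^ (n+2)
      let a := rep x.1
      let b := rep x.2
      if 1-4*s ≤ a ∧ a < 1-3*s ∧ s ≤ b ∧ b < 2*s then x + tv (5*s-1) (1-2*s)
      else if 1-3*s ≤ a ∧ a < 1-2*s ∧ s ≤ b ∧ b < 2*s then x + tv s 0
      else if 1-4*s ≤ a ∧ a < 1-3*s ∧ 0 ≤ b ∧ b < s then x + tv (3*s) s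
      else if 1-3*s ≤ a ∧ a < 1-2*s ∧ 0 ≤ b ∧ b < s then x + tv s 0
      else if 1-2*s ≤ a ∧ a < 1 ∧ s ≤ b ∧ b < 2*s then x + tv (2*s-1) (1-3*s)
      else if 1-2*s ≤ a ∧ a < 1-s ∧ 0 ≤ b ∧ b < s then x + tv (2*s-1) (1-s)
      else if 1-s ≤ a ∧ a < 1 ∧ 0 ≤ b ∧ b < s then x
      else chaconU (n+1) x

/-- An automorphism of the torus: measurable, bijective up to null sets with measurable
inverse, and measure-preserving. -/
def IsAutomorphism (U : T2 → T2) : Prop :=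
  Measurable U ∧ ∃ V : T2 → T2, Measurable V ∧
    (∀ᵐ x ∂(volume : Measure T2), V (U x) = x) ∧
    (∀ᵐ x ∂(volume : Measure T2), U (V x) = x) ∧
    ∀ A : Set T2, MeasurableSet A → volume (U ⁻¹' A) = volume A


/-! ### Combinatorics of the tower -/

/-- Height of the `n`-th tower; in closed form `4 ^ n - 1`. -/
def hgt : ℕ → ℕ
  | 0 => 0
  | n + 1 => 4 * hgt n + 3

/-- Dyadic coordinates (column, row) of the `i`-th level of the `n`-th tower, the levels being
dyadic squares of side `2⁻ⁿ`. The tower of stage `n + 1` is obtained by cutting every level of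
stage `n` into quarters, and stacking: upper left column, upper right column, a spacer,
lower left column, a spacer, lower right column, a spacer. The three spacers are quarters of the
square `(2 ^ n - 1, 0)`, the only one which stage `n` leaves out. -/
def tpos : ℕ → ℕ → ℕ × ℕ
  | 0, _ => (0, 0)
  | n + 1, i =>
    if i < hgt n then (2 * (tpos n i).1, 2 * (tpos n i).2 + 1)
    else if i < 2 * hgt n then (2 * (tpos n (i - hgt n)).1 + 1, 2 * (tpos n (i - hgt n)).2 + 1)
    else if i = 2 * hgt n then (2 * 2 ^ n - 2, 1)
    else if i < 3 * hgt n + 1 then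
      (2 * (tpos n (i - (2 * hgt n + 1))).1, 2 * (tpos n (i - (2 * hgt n + 1))).2)
    else if i = 3 * hgt n + 1 then (2 * 2 ^ n - 1, 1)
    else if i < 4 * hgt n + 2 then
      (2 * (tpos n (i - (3 * hgt n + 2))).1 + 1, 2 * (tpos n (i - (3 * hgt n + 2))).2)
    else (2 * 2 ^ n - 2, 0)

lemma hgt_add_one (n : ℕ) : hgt n + 1 = 4 ^ n := by
  induction n with
  | zero => rfl
  | succ n ih => rw [hgt, pow_succ]; omega

lemma tpos_ul {n i : ℕ} (hi : i < hgt n) :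
    tpos (n + 1) i = (2 * (tpos n i).1, 2 * (tpos n i).2 + 1) := by
  simp [tpos, hi]

lemma tpos_ur {n i : ℕ} (hi : i < hgt n) :
    tpos (n + 1) (hgt n + i) = (2 * (tpos n i).1 + 1, 2 * (tpos n i).2 + 1) := by
  rw [tpos, if_neg (by omega), if_pos (by omega), Nat.add_sub_cancel_left]

lemma tpos_s1 (n : ℕ) : tpos (n + 1) (2 * hgt n) = (2 * 2 ^ n - 2, 1) := by
  rw [tpos, if_neg (by omega), if_neg (by omega), if_pos rfl]

lemma tpos_ll {n i : ℕ} (hi : i < hgt n) :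
    tpos (n + 1) (2 * hgt n + 1 + i) = (2 * (tpos n i).1, 2 * (tpos n i).2) := by
  rw [tpos, if_neg (by omega), if_neg (by omega), if_neg (by omega), if_pos (by omega),
    Nat.add_sub_cancel_left]

lemma tpos_s2 (n : ℕ) : tpos (n + 1) (3 * hgt n + 1) = (2 * 2 ^ n - 1, 1) := by
  rw [tpos, if_neg (by omega), if_neg (by omega), if_neg (by omega), if_neg (by omega),
    if_pos rfl]

lemma tpos_lr {n i : ℕ} (hi : i < hgt n) :
    tpos (n + 1) (3 * hgt n + 2 + i) = (2 * (tpos n i).1 + 1, 2 * (tpos n i).2) := by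
  rw [tpos, if_neg (by omega), if_neg (by omega), if_neg (by omega), if_neg (by omega),
    if_neg (by omega), if_pos (by omega), Nat.add_sub_cancel_left]

lemma tpos_s3 (n : ℕ) : tpos (n + 1) (4 * hgt n + 2) = (2 * 2 ^ n - 2, 0) := by
  rw [tpos, if_neg (by omega), if_neg (by omega), if_neg (by omega), if_neg (by omega),
    if_neg (by omega), if_neg (by omega)]

/-- The levels of stage `n + 1`: four copies of the stage `n` tower and three spacers. -/
lemma level_cases {n i : ℕ} (hi : i < hgt (n + 1)) :
    (∃ k < hgt n, k = i) ∨ (∃ k < hgt n, i = hgt n + k) ∨ i = 2 * hgt n ∨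
    (∃ k < hgt n, i = 2 * hgt n + 1 + k) ∨ i = 3 * hgt n + 1 ∨
    (∃ k < hgt n, i = 3 * hgt n + 2 + k) ∨ i = 4 * hgt n + 2 := by
  rw [hgt] at hi
  rcases lt_or_ge i (hgt n) with h | h
  · exact .inl ⟨i, h, rfl⟩
  rcases lt_or_ge i (2 * hgt n) with h | h
  · exact .inr (.inl ⟨i - hgt n, by omega, by omega⟩)
  rcases eq_or_lt_of_le h with h | h
  · exact .inr (.inr (.inl h.symm))
  rcases lt_or_ge i (3 * hgt n + 1) with h | h
  · exact .inr (.inr (.inr (.inl ⟨i - (2 * hgt n + 1), by omega, by omega⟩)))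
  rcases eq_or_lt_of_le h with h | h
  · exact .inr (.inr (.inr (.inr (.inl h.symm))))
  rcases lt_or_ge i (4 * hgt n + 2) with h | h
  · exact .inr (.inr (.inr (.inr (.inr (.inl ⟨i - (3 * hgt n + 2), by omega, by omega⟩)))))
  · exact .inr (.inr (.inr (.inr (.inr (.inr (by omega))))))

/-- The levels are squares of the dyadic grid, none of them is the lower right corner square,
and only the last one can be its left neighbour. -/
lemma tpos_spec (n : ℕ) : ∀ i < hgt n, (tpos n i).1 < 2 ^ n ∧ (tpos n i).2 < 2 ^ n ∧
    ¬ ((tpos n i).1 + 1 = 2 ^ n ∧ (tpos n i).2 = 0) ∧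
    ((tpos n i).1 + 2 = 2 ^ n → (tpos n i).2 = 0 → i + 1 = hgt n) := by
  induction n with
  | zero => intro i hi; simp [hgt] at hi
  | succ n ih =>
    intro i hi
    have hp : 0 < 2 ^ n := by positivity
    rcases level_cases hi with ⟨k, hk, rfl⟩ | ⟨k, hk, rfl⟩ | rfl | ⟨k, hk, rfl⟩ | rfl |
      ⟨k, hk, rfl⟩ | rfl
    · rw [tpos_ul hk, pow_succ]; have := ih _ hk; dsimp only; omega
    · rw [tpos_ur hk, pow_succ]; have := ih _ hk; dsimp only; omega
    · rw [tpos_s1, pow_succ]; dsimp only; omega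
    · rw [tpos_ll hk, pow_succ]; have := ih _ hk; dsimp only; omega
    · rw [tpos_s2, pow_succ]; dsimp only; omega
    · rw [tpos_lr hk, pow_succ]; have := ih _ hk; dsimp only; omega
    · rw [tpos_s3, pow_succ, hgt]; dsimp only; omega

lemma tpos_inj (n : ℕ) : ∀ i < hgt n, ∀ j < hgt n, tpos n i = tpos n j → i = j := by
  induction n with
  | zero => intro i hi; simp [hgt] at hi
  | succ n ih =>
    intro i hi j hj hij
    have hp : 0 < 2 ^ n := by positivity
    -- The parities of the coordinates tell the four columns apart; a spacer has the wrong parity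
    -- or is a quarter of a square which is no level of stage `n`.
    rcases level_cases hi with ⟨k, hk, rfl⟩ | ⟨k, hk, rfl⟩ | rfl | ⟨k, hk, rfl⟩ | rfl |
      ⟨k, hk, rfl⟩ | rfl <;>
    rcases level_cases hj with ⟨l, hl, rfl⟩ | ⟨l, hl, rfl⟩ | rfl | ⟨l, hl, rfl⟩ | rfl |
      ⟨l, hl, rfl⟩ | rfl <;>
    (try have hk1 := (tpos_spec n k hk).2.2.1) <;>
    (try have hl1 := (tpos_spec n l hl).2.2.1) <;>
    (try have hkl := fun u v => ih k hk l hl (Prod.ext u v)) <;>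
    simp only [tpos_ul, tpos_ur, tpos_ll, tpos_lr, tpos_s1, tpos_s2, tpos_s3, *,
      Prod.mk.injEq] at hij <;> omega

lemma tpos_zero {n : ℕ} (hn : 1 ≤ n) : tpos n 0 = (0, 2 ^ n - 1) := by
  induction n, hn using Nat.le_induction with
  | base => rfl
  | succ n hn ih =>
    have h1 := hgt_add_one n
    have h2 : 4 ^ 1 ≤ 4 ^ n := Nat.pow_le_pow_right (by norm_num) hn
    have hp : 0 < 2 ^ n := by positivity
    rw [tpos_ul (by omega), ih, pow_succ, Prod.ext_iff]; dsimp only; omega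

lemma tpos_last {n : ℕ} (hn : 1 ≤ n) : tpos n (hgt n - 1) = (2 ^ n - 2, 0) := by
  obtain ⟨m, rfl⟩ : ∃ m, n = m + 1 := ⟨n - 1, by omega⟩
  rw [show hgt (m + 1) - 1 = 4 * hgt m + 2 by rw [hgt]; omega, tpos_s3, pow_succ, mul_comm]

/-! ### Dyadic cells of the torus -/

lemma rep_nonneg (x : AddCircle (1:ℝ)) : 0 ≤ rep x := ((AddCircle.equivIco 1 0) x).2.1

lemma rep_lt_one (x : AddCircle (1:ℝ)) : rep x < 1 := by
  have h : rep x < 0 + 1 := ((AddCircle.equivIco (1:ℝ) 0) x).2.2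
  linarith

lemma coe_rep (x : AddCircle (1:ℝ)) : ((rep x : ℝ) : AddCircle (1:ℝ)) = x :=
  AddCircle.coe_equivIco

lemma rep_coe {t : ℝ} (h0 : 0 ≤ t) (h1 : t < 1) : rep (t : AddCircle (1:ℝ)) = t := by
  have h : t ∈ Ico (0:ℝ) (0 + 1) := ⟨h0, by simpa using h1⟩
  rw [rep, AddCircle.equivIco_coe_eq h]

lemma rep_add {x : AddCircle (1:ℝ)} {t : ℝ} (h0 : 0 ≤ rep x + t) (h1 : rep x + t < 1) :
    rep (x + (t : AddCircle (1:ℝ))) = rep x + t := by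
  conv_lhs => rw [← coe_rep x, ← AddCircle.coe_add]
  exact rep_coe h0 h1

lemma measurable_rep : Measurable rep :=
  measurable_subtype_coe.comp (AddCircle.measurableEquivIco 1 0).measurable

/-- Index of the dyadic arc of length `2⁻ⁿ` which contains `x`. -/
def cell1 (n : ℕ) (x : AddCircle (1:ℝ)) : ℕ := ⌊2 ^ n * rep x⌋₊

/-- Coordinates of the dyadic square of side `2⁻ⁿ` which contains `x`. -/
def cell (n : ℕ) (x : T2) : ℕ × ℕ := (cell1 n x.1, cell1 n x.2)

lemma cell1_eq_iff {n a : ℕ} {x : AddCircle (1:ℝ)} :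
    cell1 n x = a ↔ (a : ℝ) ≤ 2 ^ n * rep x ∧ 2 ^ n * rep x < a + 1 :=
  Nat.floor_eq_iff (mul_nonneg (by positivity) (rep_nonneg x))

lemma cell1_eq_iff' {n a : ℕ} {x : AddCircle (1:ℝ)} :
    cell1 n x = a ↔ a * (1 / 2 ^ n : ℝ) ≤ rep x ∧ rep x < a * (1 / 2 ^ n : ℝ) + 1 / 2 ^ n := by
  have hp : (0:ℝ) < 2 ^ n := by positivity
  rw [cell1_eq_iff, mul_one_div, ← add_div, div_le_iff₀ hp, lt_div_iff₀ hp, mul_comm]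

lemma cell1_succ_div (n : ℕ) (x : AddCircle (1:ℝ)) : cell1 (n + 1) x / 2 = cell1 n x := by
  rw [cell1, cell1, ← Nat.floor_div_natCast]
  congr 1
  push_cast
  ring

lemma cell_eq_of_cell_succ_eq {n : ℕ} {x y : T2} (h : cell (n + 1) x = cell (n + 1) y) :
    cell n x = cell n y := by
  simp only [cell, Prod.mk.injEq] at h ⊢
  rw [← cell1_succ_div, ← cell1_succ_div n x.2, h.1, h.2, cell1_succ_div, cell1_succ_div]
  exact ⟨rfl, rfl⟩

lemma measurable_cell1 (n : ℕ) : Measurable (cell1 n) :=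
  Nat.measurable_floor.comp (measurable_const.mul measurable_rep)

lemma measurable_cell (n : ℕ) : Measurable (cell n) :=
  ((measurable_cell1 n).comp measurable_fst).prodMk ((measurable_cell1 n).comp measurable_snd)

lemma cell1_add {n a b : ℕ} (hb : b < 2 ^ n) {x : AddCircle (1:ℝ)} (hx : cell1 n x = a) :
    cell1 n (x + (((b - a : ℝ) / 2 ^ n : ℝ) : AddCircle (1:ℝ))) = b := by
  have hp : (0:ℝ) < 2 ^ n := by positivity
  have hb' : (b : ℝ) + 1 ≤ 2 ^ n := by exact_mod_cast hb
  obtain ⟨h1, h2⟩ := cell1_eq_iff.1 hx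
  have key : 2 ^ n * (rep x + (b - a : ℝ) / 2 ^ n) = 2 ^ n * rep x + (b - a) := by field_simp
  have hb0 : (0:ℝ) ≤ b := by positivity
  rw [cell1_eq_iff, rep_add, key]
  · constructor <;> linarith
  · by_contra! hneg
    nlinarith
  · by_contra! hneg
    nlinarith

lemma volume_cell1 {n a : ℕ} (ha : a < 2 ^ n) :
    volume {x : AddCircle (1:ℝ) | cell1 n x = a} = ENNReal.ofReal (1 / 2 ^ n) := by
  have hp : (0:ℝ) < 1 / 2 ^ n := by positivity
  have hp' : (0:ℝ) < 2 ^ n := by positivity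
  have ha' : (a : ℝ) + 1 ≤ 2 ^ n := by exact_mod_cast ha
  have hm : MeasurableSet {x : AddCircle (1:ℝ) | cell1 n x = a} :=
    measurable_cell1 n (measurableSet_singleton a)
  rw [← (AddCircle.measurePreserving_mk 1 0).measure_preimage hm.nullMeasurableSet,
    Measure.restrict_congr_set (Ico_ae_eq_Ioc (a := (0:ℝ)) (b := 0 + 1)).symm,
    Measure.restrict_apply ((AddCircle.measurePreserving_mk 1 0).measurable hm)]
  have hs : ((fun t : ℝ => (t : AddCircle (1:ℝ))) ⁻¹' {x : AddCircle (1:ℝ) | cell1 n x = a}) ∩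
      Ico (0:ℝ) (0 + 1) = Ico (a * (1 / 2 ^ n : ℝ)) (a * (1 / 2 ^ n : ℝ) + 1 / 2 ^ n) := by
    have e1 : a * (1 / 2 ^ n : ℝ) + 1 / 2 ^ n ≤ 1 := by
      rw [mul_one_div, ← add_div, div_le_one hp']; exact ha'
    have e0 : (0:ℝ) ≤ a * (1 / 2 ^ n : ℝ) := by positivity
    ext t
    simp only [mem_inter_iff, mem_preimage, mem_ofPred_eq, cell1_eq_iff', mem_Ico, zero_add]
    constructor
    · rintro ⟨h, h0, h1⟩
      rwa [rep_coe h0 h1] at h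
    · rintro ⟨h0, h1⟩
      rw [rep_coe (by linarith) (by linarith)]
      exact ⟨⟨h0, h1⟩, by linarith, by linarith⟩
  rw [hs, Real.volume_Ico]
  congr 1
  ring

lemma volume_cell {n : ℕ} {p : ℕ × ℕ} (h1 : p.1 < 2 ^ n) (h2 : p.2 < 2 ^ n) :
    volume {x : T2 | cell n x = p} = ENNReal.ofReal (1 / 4 ^ n) := by
  have : {x : T2 | cell n x = p} =
      {x : AddCircle (1:ℝ) | cell1 n x = p.1} ×ˢ {x : AddCircle (1:ℝ) | cell1 n x = p.2} := by
    ext x; simp [cell, Prod.ext_iff]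
  rw [this, Measure.volume_eq_prod, Measure.prod_prod, volume_cell1 h1, volume_cell1 h2,
    ← ENNReal.ofReal_mul (by positivity)]
  congr 1
  rw [show (4:ℝ) = 2 * 2 by norm_num, mul_pow]
  field_simp

/-! ### Action of the maps on the levels -/

/-- Stage `m + 1` only modifies the map on `[1 - 2 · 2⁻ᵐ, 1) × [0, 2⁻ᵐ)`. -/
lemma chaconU_succ_of_not {m : ℕ} (hm : 1 ≤ m) {x : T2}
    (h : ¬ (1 - 2 * (1 / 2 ^ m : ℝ) ≤ rep x.1 ∧ rep x.2 < 1 / 2 ^ m)) :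
    chaconU (m + 1) x = chaconU m x := by
  obtain ⟨k, rfl⟩ : ∃ k, m = k + 1 := ⟨m - 1, by omega⟩
  have hs : (1 / 2 ^ (k + 1) : ℝ) = 2 * (1 / 2 ^ (k + 2)) := by rw [pow_succ _ (k + 1)]; field_simp
  have hp : (0:ℝ) < 1 / 2 ^ (k + 2) := by positivity
  rw [hs] at h
  rw [chaconU]
  generalize (1 / 2 ^ (k + 2) : ℝ) = s at h hp
  dsimp only
  have H : ∀ {P : Prop}, (P → 1 - 4 * s ≤ rep x.1 ∧ rep x.2 < 2 * s) → ¬ P := fun hP p =>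
    h ⟨by linarith [(hP p).1], (hP p).2⟩
  rw [if_neg (H (by rintro ⟨_, _, _, _⟩; constructor <;> linarith)),
    if_neg (H (by rintro ⟨_, _, _, _⟩; constructor <;> linarith)),
    if_neg (H (by rintro ⟨_, _, _, _⟩; constructor <;> linarith)),
    if_neg (H (by rintro ⟨_, _, _, _⟩; constructor <;> linarith)),
    if_neg (H (by rintro ⟨_, _, _, _⟩; constructor <;> linarith)),
    if_neg (H (by rintro ⟨_, _, _, _⟩; constructor <;> linarith)),
    if_neg (H (by rintro ⟨_, _, _, _⟩; constructor <;> linarith))]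

/-- Before the last level, the tower of stage `n` avoids the region which later stages modify. -/
lemma not_region {n i : ℕ} (hi : i + 1 < hgt n) {x : T2} (hx : cell n x = tpos n i) :
    ¬ (1 - 2 * (1 / 2 ^ n : ℝ) ≤ rep x.1 ∧ rep x.2 < 1 / 2 ^ n) := by
  rintro ⟨h1, h2⟩
  obtain ⟨s1, s2, s3, s4⟩ := tpos_spec n i (by omega)
  rw [← hx] at s1 s2 s3 s4
  have hp : (0:ℝ) < 2 ^ n := by positivity
  have hb : cell1 n x.2 = 0 := by
    rw [cell1_eq_iff']
    simpa using ⟨rep_nonneg _, by simpa using h2⟩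
  have ha : 2 ^ n ≤ cell1 n x.1 + 2 := by
    have := (cell1_eq_iff.1 (rfl : cell1 n x.1 = _)).2
    have h3 : (2:ℝ) ^ n - 2 ≤ 2 ^ n * rep x.1 := by
      calc (2:ℝ) ^ n - 2 = 2 ^ n * (1 - 2 * (1 / 2 ^ n : ℝ)) := by field_simp
        _ ≤ _ := by gcongr
    have h4 : (2 ^ n : ℝ) < ((cell1 n x.1 + 3 : ℕ) : ℝ) := by push_cast; linarith
    have h5 : 2 ^ n < cell1 n x.1 + 3 := by exact_mod_cast h4
    omega
  simp only [cell] at s1 s2 s3 s4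
  omega

/-- Displacement between two cells of side `2⁻ⁿ`, as an element of the torus. -/
def disp (n : ℕ) (p q : ℕ × ℕ) : T2 :=
  tv (((q.1 : ℝ) - p.1) / 2 ^ n) (((q.2 : ℝ) - p.2) / 2 ^ n)

lemma cell_add_disp {n : ℕ} {p q : ℕ × ℕ} (h1 : q.1 < 2 ^ n) (h2 : q.2 < 2 ^ n) {x : T2}
    (hx : cell n x = p) : cell n (x + disp n p q) = q := by
  simp only [cell, Prod.ext_iff] at hx ⊢
  exact ⟨cell1_add h1 hx.1, cell1_add h2 hx.2⟩

lemma disp_congr {n m : ℕ} {p q p' q' : ℕ × ℕ}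
    (h1 : ((q.1 : ℝ) - p.1) / 2 ^ n = ((q'.1 : ℝ) - p'.1) / 2 ^ m)
    (h2 : ((q.2 : ℝ) - p.2) / 2 ^ n = ((q'.2 : ℝ) - p'.2) / 2 ^ m) :
    disp n p q = disp m p' q' := by rw [disp, disp, h1, h2]

lemma cell1_bounds {m p c : ℕ} (hpc : p + c = 2 ^ m) {x : AddCircle (1:ℝ)}
    (hx : cell1 m x = p) :
    1 - c * (1 / 2 ^ m : ℝ) ≤ rep x ∧ rep x < 1 - c * (1 / 2 ^ m : ℝ) + 1 / 2 ^ m := by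
  have h : (p : ℝ) + c = 2 ^ m := by exact_mod_cast hpc
  have h' : p * (1 / 2 ^ m : ℝ) = 1 - c * (1 / 2 ^ m : ℝ) := by
    have h2 : ((p : ℝ) + c) * (1 / 2 ^ m) = 1 := by rw [h]; field_simp
    linarith
  rw [← h']
  exact cell1_eq_iff'.1 hx

/-- The six cells, at stage `m ≥ 2`, on which `U_m` makes the connections between the four columns
and the spacers: the tops of the columns (upper left, upper right, lower left, lower right), and
the first two spacers. -/
lemma chaconU_connect {m : ℕ} (hm : 2 ≤ m) {x : T2} {p q : ℕ × ℕ} (hx : cell m x = p)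
    (h : (p.1 + 4 = 2 ^ m ∧ p.2 = 1 ∧ q.1 = 1 ∧ q.2 + 1 = 2 ^ m) ∨
      (p.1 + 3 = 2 ^ m ∧ p.2 = 1 ∧ q.1 + 2 = 2 ^ m ∧ q.2 = 1) ∨
      (p.1 + 4 = 2 ^ m ∧ p.2 = 0 ∧ q.1 + 1 = 2 ^ m ∧ q.2 = 1) ∨
      (p.1 + 3 = 2 ^ m ∧ p.2 = 0 ∧ q.1 + 2 = 2 ^ m ∧ q.2 = 0) ∨
      (p.1 + 2 = 2 ^ m ∧ p.2 = 1 ∧ q.1 = 0 ∧ q.2 + 2 = 2 ^ m) ∨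
      (p.1 + 1 = 2 ^ m ∧ p.2 = 1 ∧ q.1 = 1 ∧ q.2 + 2 = 2 ^ m)) :
    chaconU m x = x + disp m p q := by
  obtain ⟨k, rfl⟩ : ∃ k, m = k + 2 := ⟨m - 2, by omega⟩
  have hp : (0:ℝ) < 1 / 2 ^ (k + 2) := by positivity
  have hN : ((2 : ℝ) ^ (k + 2)) * (1 / 2 ^ (k + 2)) = 1 := by field_simp
  have hx1 : cell1 (k + 2) x.1 = p.1 := by rw [← hx]; rfl
  have hx2 : cell1 (k + 2) x.2 = p.2 := by rw [← hx]; rfl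
  -- It suffices to identify the real displacements.
  have hd : ∀ a b : ℝ, ((q.1 : ℝ) - p.1) * (1 / 2 ^ (k + 2)) = a →
      ((q.2 : ℝ) - p.2) * (1 / 2 ^ (k + 2)) = b → x + tv a b = x + disp (k + 2) p q := by
    intro a b ha hb
    rw [disp, ← mul_one_div, ← mul_one_div (_ - _) (_ ^ _), ha, hb]
  have b2 := cell1_eq_iff'.1 hx2
  rw [chaconU]
  rcases h with ⟨h1, h2, h3, h4⟩ | ⟨h1, h2, h3, h4⟩ | ⟨h1, h2, h3, h4⟩ | ⟨h1, h2, h3, h4⟩ |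
    ⟨h1, h2, h3, h4⟩ | ⟨h1, h2, h3, h4⟩ <;>
  (obtain ⟨b1, b1'⟩ := cell1_bounds h1 hx1
   obtain ⟨b2, b2'⟩ := b2
   have h1' := congrArg (Nat.cast (R := ℝ)) h1
   have h2' := congrArg (Nat.cast (R := ℝ)) h2
   have h3' := congrArg (Nat.cast (R := ℝ)) h3
   have h4' := congrArg (Nat.cast (R := ℝ)) h4
   rw [h2] at b2 b2'
   push_cast at h1' h2' h3' h4' b1 b1' b2 b2'
   generalize (1 / 2 ^ (k + 2) : ℝ) = s at *
   generalize (2 ^ (k + 2) : ℝ) = N at *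
   dsimp only
   repeat first
    | (rw [if_neg]; rotate_left; (rintro ⟨_, _, _, _⟩; linarith))
    | (rw [if_pos]; rotate_left; (refine ⟨?_, ?_, ?_, ?_⟩ <;> linarith))
   refine hd _ _ ?_ ?_
   · first
     | linear_combination s * h3' - s * h1'
     | linear_combination s * h3' - s * h1' - hN
   · first
     | linear_combination s * h4' - s * h2'
     | linear_combination s * h4' - s * h2' + hN)

lemma chaconU_one {i : ℕ} (hi : i + 1 < hgt 1) {x : T2} (hx : cell 1 x = tpos 1 i) :
    chaconU 1 x = x + disp 1 (tpos 1 i) (tpos 1 (i + 1)) := by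
  have hi' : i = 0 ∨ i = 1 := by simp [hgt] at hi; omega
  have hx1 : cell1 1 x.1 = (tpos 1 i).1 := by rw [← hx]; rfl
  have hx2 : cell1 1 x.2 = (tpos 1 i).2 := by rw [← hx]; rfl
  rw [cell1_eq_iff'] at hx1 hx2
  obtain ⟨a1, a2⟩ := hx1
  obtain ⟨b1, b2⟩ := hx2
  rw [chaconU]
  dsimp only
  rcases hi' with rfl | rfl
  · norm_num [tpos, hgt] at a1 a2 b1 b2
    rw [if_pos (by refine ⟨?_, ?_, ?_, ?_⟩ <;> linarith)]
    norm_num [disp, tpos, hgt]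
  · norm_num [tpos, hgt] at a1 a2 b1 b2
    rw [if_neg (by rintro ⟨_, _, _, _⟩; linarith),
      if_pos (by refine ⟨?_, ?_, ?_, ?_⟩ <;> linarith)]
    norm_num [disp, tpos, hgt]

/-- `U_n` translates each level of the tower of stage `n`, except the last one, onto the next. -/
lemma chaconU_level {n : ℕ} (hn : 1 ≤ n) : ∀ i, i + 1 < hgt n → ∀ x : T2, cell n x = tpos n i →
    chaconU n x = x + disp n (tpos n i) (tpos n (i + 1)) := by
  induction n, hn using Nat.le_induction with
  | base => intro i hi x hx; exact chaconU_one hi hx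
  | succ n hn ih =>
    intro i hi x hx
    have hh := hgt_add_one n
    have h4 : 4 ^ 1 ≤ 4 ^ n := Nat.pow_le_pow_right (by norm_num) hn
    have hM : 2 ^ (n + 1) = 2 * 2 ^ n := by rw [pow_succ, mul_comm]
    have h2 : 2 ^ 1 ≤ 2 ^ n := Nat.pow_le_pow_right (by norm_num) hn
    have hpos : (0:ℝ) < 2 ^ n := by positivity
    have hlast := tpos_last hn
    have hzero := tpos_zero hn
    -- Inside a column, the map and its displacement are those of stage `n`.
    have inner : ∀ k, k + 1 < hgt n → ∀ e f : ℕ, e < 2 → f < 2 →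
        tpos (n + 1) i = (2 * (tpos n k).1 + e, 2 * (tpos n k).2 + f) →
        tpos (n + 1) (i + 1) = (2 * (tpos n (k + 1)).1 + e, 2 * (tpos n (k + 1)).2 + f) →
        chaconU (n + 1) x = x + disp (n + 1) (tpos (n + 1) i) (tpos (n + 1) (i + 1)) := by
      intro k hk e f he hf h1 h2
      have hxk : cell n x = tpos n k := by
        simp only [h1, cell, Prod.mk.injEq] at hx
        simp only [cell, Prod.ext_iff, ← cell1_succ_div n]
        omega
      rw [chaconU_succ_of_not hn (not_region hk hxk), ih k hk x hxk, h1, h2]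
      congr 1
      apply disp_congr <;> (push_cast; rw [pow_succ]; field_simp; ring)
    have top : ∀ k, k < hgt n → ¬ k + 1 < hgt n → k = hgt n - 1 := by intros; omega
    rcases level_cases (by omega : i < hgt (n + 1)) with ⟨k, hk, rfl⟩ | ⟨k, hk, rfl⟩ | rfl |
      ⟨k, hk, rfl⟩ | rfl | ⟨k, hk, rfl⟩ | rfl
    · by_cases hk' : k + 1 < hgt n
      · exact inner k hk' 0 1 (by omega) (by omega) (tpos_ul hk) (tpos_ul hk')
      · obtain rfl := top k hk hk'
        have e : hgt n - 1 + 1 = hgt n + 0 := by omega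
        apply chaconU_connect (by omega) hx
        rw [e, tpos_ul hk, tpos_ur (by omega), hlast, hzero]
        dsimp only
        omega
    · by_cases hk' : k + 1 < hgt n
      · exact inner k hk' 1 1 (by omega) (by omega) (tpos_ur hk) (tpos_ur hk')
      · obtain rfl := top k hk hk'
        have e : hgt n + (hgt n - 1) + 1 = 2 * hgt n := by omega
        apply chaconU_connect (by omega) hx
        rw [e, tpos_ur hk, tpos_s1, hlast]
        dsimp only
        omega
    · apply chaconU_connect (by omega) hx
      rw [tpos_s1, ← Nat.add_zero (2 * hgt n + 1), tpos_ll (by omega), hzero]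
      dsimp only
      omega
    · by_cases hk' : k + 1 < hgt n
      · exact inner k hk' 0 0 (by omega) (by omega) (tpos_ll hk) (tpos_ll hk')
      · obtain rfl := top k hk hk'
        have e : 2 * hgt n + 1 + (hgt n - 1) + 1 = 3 * hgt n + 1 := by omega
        apply chaconU_connect (by omega) hx
        rw [e, tpos_ll hk, tpos_s2, hlast]
        dsimp only
        omega
    · apply chaconU_connect (by omega) hx
      rw [tpos_s2, ← Nat.add_zero (3 * hgt n + 1 + 1), tpos_lr (by omega), hzero]
      dsimp only
      omega
    · by_cases hk' : k + 1 < hgt n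
      · exact inner k hk' 1 0 (by omega) (by omega) (tpos_lr hk) (tpos_lr hk')
      · obtain rfl := top k hk hk'
        have e : 3 * hgt n + 2 + (hgt n - 1) + 1 = 4 * hgt n + 2 := by omega
        apply chaconU_connect (by omega) hx
        rw [e, tpos_lr hk, tpos_s3, hlast]
        dsimp only
        omega
    · rw [hgt] at hi
      omega

/-- From stage `n` on, the maps send each level, except the last one, into the next. -/
lemma cell_chaconU {n m : ℕ} (hn : 1 ≤ n) (hm : n ≤ m) {i : ℕ} (hi : i + 1 < hgt n) {x : T2}
    (hx : cell n x = tpos n i) : cell n (chaconU m x) = tpos n (i + 1) := by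
  have hmn : chaconU m x = chaconU n x := by
    induction m, hm using Nat.le_induction with
    | base => rfl
    | succ m hm ih =>
      rw [← ih]
      apply chaconU_succ_of_not (hn.trans hm)
      have hle : (1 / 2 ^ m : ℝ) ≤ 1 / 2 ^ n := by
        gcongr
        norm_num
      rintro ⟨h1, h2⟩
      exact not_region hi hx ⟨by linarith, by linarith⟩
  obtain ⟨h1, h2, -⟩ := tpos_spec n (i + 1) hi
  rw [hmn, chaconU_level hn i hi x hx]
  exact cell_add_disp h1 h2 hx

/-! ### Ergodicity of the product from the tower structure -/

/-- The measure-theoretic content of the cutting and stacking construction: a measure preserving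
map `T` has towers `L n 0, …, L n (hgt n - 1)` of equal small measure, stage `n + 1` runs through
the tower of stage `n` twice in a row and then, after one extra step, a third time, and the towers
generate the σ-algebra (of the square of the space). -/
structure ChaconTower {X : Type*} [MeasurableSpace X] (μ : Measure X) (T : X → X)
    (L : ℕ → ℕ → Set X) : Prop where
  pres : MeasurePreserving T μ μ
  meas : ∀ n i, MeasurableSet (L n i)
  size : ∀ n i, i < hgt n → μ.real (L n i) = 1 / 4 ^ n
  disj : ∀ n i j, i < hgt n → j < hgt n → i ≠ j → Disjoint (L n i) (L n j)
  step : ∀ n i, i + 1 < hgt n → T ⁻¹' L n (i + 1) =ᵐ[μ] L n i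
  fst_sub : ∀ n i, i < hgt n → L (n + 1) i ⊆ L n i
  snd_sub : ∀ n i, i < hgt n → L (n + 1) (hgt n + i) ⊆ L n i
  trd_sub : ∀ n i, i < hgt n → L (n + 1) (2 * hgt n + 1 + i) ⊆ L n i
  approx : ∀ E : Set (X × X), MeasurableSet E → ∀ ε > 0, ∀ N, ∃ n ≥ N, ∃ E' : Set (X × X),
    MeasurableSet E' ∧ (μ.prod μ).real (symmDiff E E') < ε ∧
    ∀ i j, i < hgt n → j < hgt n → L n i ×ˢ L n j ⊆ E' ∨ Disjoint (L n i ×ˢ L n j) E'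

namespace ChaconTower

set_option linter.unusedSectionVars false

variable {X : Type*} [MeasurableSpace X] {μ : Measure X} [IsProbabilityMeasure μ] {T : X → X}
  {L : ℕ → ℕ → Set X}

lemma size_prod (h : ChaconTower μ T L) {n i j : ℕ} (hi : i < hgt n) (hj : j < hgt n) :
    (μ.prod μ).real (L n i ×ˢ L n j) = 1 / 4 ^ n * (1 / 4 ^ n) := by
  rw [measureReal_prod_prod, h.size n i hi, h.size n j hj]

lemma meas_prod (h : ChaconTower μ T L) (n i j : ℕ) : MeasurableSet (L n i ×ˢ L n j) :=
  (h.meas n i).prod (h.meas n j)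

lemma disj_prod (h : ChaconTower μ T L) {n : ℕ} {s : Finset (ℕ × ℕ)}
    (hs : ∀ p ∈ s, p.1 < hgt n ∧ p.2 < hgt n) (D : Set (X × X)) :
    (s : Set (ℕ × ℕ)).PairwiseDisjoint (fun p => D ∩ L n p.1 ×ˢ L n p.2) := by
  intro p hp q hq hpq
  apply Disjoint.mono inter_subset_right inter_subset_right
  rw [Set.disjoint_prod]
  by_cases h1 : p.1 = q.1
  · exact .inr (h.disj n _ _ (hs p hp).2 (hs q hq).2 fun h2 => hpq (Prod.ext h1 h2))
  · exact .inl (h.disj n _ _ (hs p hp).1 (hs q hq).1 h1)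

lemma sum_le (h : ChaconTower μ T L) {n : ℕ} {s : Finset (ℕ × ℕ)}
    (hs : ∀ p ∈ s, p.1 < hgt n ∧ p.2 < hgt n) {D : Set (X × X)} (hD : MeasurableSet D) :
    ∑ p ∈ s, (μ.prod μ).real (D ∩ L n p.1 ×ˢ L n p.2) ≤ (μ.prod μ).real D := by
  rw [← measureReal_biUnion_finset (h.disj_prod hs D) fun p _ => hD.inter (h.meas_prod n _ _)]
  exact measureReal_mono (iUnion₂_subset fun _ _ => inter_subset_left)

lemma le_sum (h : ChaconTower μ T L) {n : ℕ} {s : Finset (ℕ × ℕ)}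
    (hs : ∀ p ∈ s, p.1 < hgt n ∧ p.2 < hgt n) {D : Set (X × X)} (hD : MeasurableSet D) :
    (μ.prod μ).real D ≤ ∑ p ∈ s, (μ.prod μ).real (D ∩ L n p.1 ×ˢ L n p.2) +
      (1 - s.card * (1 / 4 ^ n * (1 / 4 ^ n))) := by
  have h1 := h.sum_le hs hD.compl
  have h2 := measureReal_add_measureReal_compl (μ := μ.prod μ) hD
  have h3 : ∑ p ∈ s, (μ.prod μ).real (D ∩ L n p.1 ×ˢ L n p.2) +
      ∑ p ∈ s, (μ.prod μ).real (Dᶜ ∩ L n p.1 ×ˢ L n p.2) =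
      s.card * (1 / 4 ^ n * (1 / 4 ^ n)) := by
    rw [← Finset.sum_add_distrib, ← nsmul_eq_mul, ← Finset.sum_const]
    refine Finset.sum_congr rfl fun p hp => ?_
    rw [← h.size_prod (hs p hp).1 (hs p hp).2, inter_comm D, inter_comm Dᶜ, ← sdiff_eq,
      measureReal_inter_add_sdiff hD]
  simp only [probReal_univ] at h2
  linarith

lemma transport {Y : Type*} [MeasurableSpace Y] {ν : Measure Y} {g : Y → Y}
    (hg : MeasurePreserving g ν ν) {E R R' : Set Y} (hE : MeasurableSet E)
    (hR' : MeasurableSet R') (hgE : g ⁻¹' E =ᵐ[ν] E) (hgR : g ⁻¹' R' =ᵐ[ν] R) :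
    ν.real (E ∩ R') = ν.real (E ∩ R) := by
  rw [← hg.measureReal_preimage (hE.inter hR').nullMeasurableSet, preimage_inter]
  exact measureReal_congr (hgE.inter hgR)

lemma diag (h : ChaconTower μ T L) {E : Set (X × X)} (hE : MeasurableSet E)
    (hS : Prod.map T T ⁻¹' E =ᵐ[μ.prod μ] E) {n i j : ℕ} (t : ℕ) (hi : i + t < hgt n)
    (hj : j + t < hgt n) :
    (μ.prod μ).real (E ∩ L n (i + t) ×ˢ L n (j + t)) =
      (μ.prod μ).real (E ∩ L n i ×ˢ L n j) := by
  induction t with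
  | zero => rfl
  | succ t ih =>
    rw [← ih (by omega) (by omega)]
    exact transport (h.pres.prod h.pres) hE (h.meas_prod _ _ _) hS
      (Measure.set_prod_ae_eq (h.step n (i + t) hi) (h.step n (j + t) hj))

/-- The mechanism behind weak mixing. If `F` is invariant under `T × T`, it cannot be nearly full
in the rectangle `(i, j + 1)` and nearly empty in `(i, j)`: moving by `hgt n` steps takes
(first quarter of level `i`) × (second quarter of level `j + 1`) to
(second quarter of level `i`) × (third quarter of level `j`). -/
lemma off_diag (h : ChaconTower μ T L) {F : Set (X × X)} (hF : MeasurableSet F)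
    (hS : Prod.map T T ⁻¹' F =ᵐ[μ.prod μ] F) {n i j : ℕ} (hi : i < hgt n) (hj : j + 1 < hgt n) :
    1 / 4 ^ n * (1 / 4 ^ n) ≤ 16 * ((μ.prod μ).real (F ∩ L n i ×ˢ L n j) +
      (μ.prod μ).real (Fᶜ ∩ L n i ×ˢ L n (j + 1))) := by
  have hh : hgt (n + 1) = 4 * hgt n + 3 := rfl
  have e1 := h.size_prod (n := n + 1) (i := i) (j := hgt n + (j + 1)) (by omega) (by omega)
  rw [← measureReal_inter_add_sdiff (s := L (n + 1) i ×ˢ L (n + 1) (hgt n + (j + 1))) hF,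
    sdiff_eq, inter_comm _ F, inter_comm _ Fᶜ,
    ← h.diag hF hS (hgt n) (by omega) (by omega), Nat.add_comm i,
    show hgt n + (j + 1) + hgt n = 2 * hgt n + 1 + j by omega] at e1
  have e2 : (μ.prod μ).real (F ∩ L (n + 1) (hgt n + i) ×ˢ L (n + 1) (2 * hgt n + 1 + j)) ≤
      (μ.prod μ).real (F ∩ L n i ×ˢ L n j) :=
    measureReal_mono (inter_subset_inter_right _
      (prod_mono (h.snd_sub n i hi) (h.trd_sub n j (by omega))))
  have e3 : (μ.prod μ).real (Fᶜ ∩ L (n + 1) i ×ˢ L (n + 1) (hgt n + (j + 1))) ≤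
      (μ.prod μ).real (Fᶜ ∩ L n i ×ˢ L n (j + 1)) :=
    measureReal_mono (inter_subset_inter_right _
      (prod_mono (h.fst_sub n i hi) (h.snd_sub n (j + 1) hj)))
  have e4 : (1 / 4 ^ (n + 1) * (1 / 4 ^ (n + 1)) : ℝ) = 1 / 4 ^ n * (1 / 4 ^ n) / 16 := by
    rw [pow_succ]; field_simp; norm_num
  rw [e4] at e1
  linarith

lemma ae_compl {Y : Type*} [MeasurableSpace Y] {ν : Measure Y} {g : Y → Y} {E : Set Y}
    (h : g ⁻¹' E =ᵐ[ν] E) : g ⁻¹' Eᶜ =ᵐ[ν] Eᶜ := by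
  rw [preimage_compl]; exact h.compl

lemma pres_snd (h : ChaconTower μ T L) :
    MeasurePreserving (Prod.map id T) (μ.prod μ) (μ.prod μ) := (MeasurePreserving.id μ).prod h.pres

lemma pres_fst (h : ChaconTower μ T L) :
    MeasurePreserving (Prod.map T id) (μ.prod μ) (μ.prod μ) := h.pres.prod (MeasurePreserving.id μ)

/-- Summed over `i` and `j`, this bounds the defect of `id × T`-invariance of `E` by its distance
to a union `E'` of rectangles. -/
lemma symmDiff_rect_le (h : ChaconTower μ T L) {E : Set (X × X)} (hE : MeasurableSet E)
    (hS : Prod.map T T ⁻¹' E =ᵐ[μ.prod μ] E) {E' : Set (X × X)} {n i j : ℕ}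
    (hE' : ∀ i j, i < hgt n → j < hgt n → L n i ×ˢ L n j ⊆ E' ∨ Disjoint (L n i ×ˢ L n j) E')
    (hi : i < hgt n) (hj : j + 1 < hgt n) :
    (μ.prod μ).real (symmDiff E (Prod.map id T ⁻¹' E) ∩ L n i ×ˢ L n j) ≤
      16 * ((μ.prod μ).real (symmDiff E E' ∩ L n i ×ˢ L n j) +
        (μ.prod μ).real (symmDiff E E' ∩ L n i ×ˢ L n (j + 1))) := by
  set ν := μ.prod μ
  have hsize : ν.real (symmDiff E (Prod.map id T ⁻¹' E) ∩ L n i ×ˢ L n j) ≤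
      1 / 4 ^ n * (1 / 4 ^ n) := by
    rw [← h.size_prod hi (by omega : j < hgt n)]
    exact measureReal_mono inter_subset_right
  have o1 := h.off_diag hE hS hi hj
  have o2 := h.off_diag hE.compl (ae_compl hS) hi hj
  rw [compl_compl] at o2
  have hW : ∀ F : Set (X × X), MeasurableSet F →
      ν.real (Prod.map id T ⁻¹' F ∩ L n i ×ˢ L n j) = ν.real (F ∩ L n i ×ˢ L n (j + 1)) := by
    intro F hF
    rw [← h.pres_snd.measureReal_preimage (hF.inter (h.meas_prod _ _ _)).nullMeasurableSet,
      preimage_inter]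
    refine measureReal_congr (Filter.EventuallyEq.rfl.inter ?_)
    exact (Measure.set_prod_ae_eq Filter.EventuallyEq.rfl (h.step n j hj)).symm
  have q : ∀ F : Set (X × X), MeasurableSet F →
      symmDiff E (Prod.map id T ⁻¹' E) ⊆ F ∪ Prod.map id T ⁻¹' F →
      ν.real (symmDiff E (Prod.map id T ⁻¹' E) ∩ L n i ×ˢ L n j) ≤
        ν.real (F ∩ L n i ×ˢ L n j) + ν.real (F ∩ L n i ×ˢ L n (j + 1)) := by
    intro F hF hsub
    rw [← hW F hF]
    refine (measureReal_mono ?_).trans (measureReal_union_le _ _)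
    rw [← union_inter_distrib_right]
    exact inter_subset_inter_left _ hsub
  have q1 := q E hE (fun z hz => by rcases hz with hz | hz; exacts [.inl hz.1, .inr hz.1])
  have q2 := q Eᶜ hE.compl (fun z hz => by rcases hz with hz | hz; exacts [.inr hz.2, .inl hz.2])
  -- In each rectangle, `E'` is full or empty, hence `E` or its complement is small.
  have d1 : ∀ k, L n i ×ˢ L n k ⊆ E' →
      ν.real (Eᶜ ∩ L n i ×ˢ L n k) ≤ ν.real (symmDiff E E' ∩ L n i ×ˢ L n k) := fun k hk =>
    measureReal_mono fun z hz => ⟨.inr ⟨hk hz.2, hz.1⟩, hz.2⟩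
  have d2 : ∀ k, Disjoint (L n i ×ˢ L n k) E' →
      ν.real (E ∩ L n i ×ˢ L n k) ≤ ν.real (symmDiff E E' ∩ L n i ×ˢ L n k) := fun k hk =>
    measureReal_mono fun z hz => ⟨.inl ⟨hz.1, disjoint_left.1 hk hz.2⟩, hz.2⟩
  have n1 : 0 ≤ ν.real (symmDiff E E' ∩ L n i ×ˢ L n j) := measureReal_nonneg
  have n2 : 0 ≤ ν.real (symmDiff E E' ∩ L n i ×ˢ L n (j + 1)) := measureReal_nonneg
  rcases hE' i j hi (by omega) with ha | ha <;> rcases hE' i (j + 1) hi hj with hb | hb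
  · linarith [d1 _ ha, d1 _ hb]
  · linarith [d1 _ ha, d2 _ hb]
  · linarith [d2 _ ha, d1 _ hb]
  · linarith [d2 _ ha, d2 _ hb]

lemma approx_small (h : ChaconTower μ T L) {E : Set (X × X)} (hE : MeasurableSet E) {ε : ℝ}
    (hε : 0 < ε) : ∃ n, 1 ≤ n ∧ (1 / 4 ^ n : ℝ) < ε ∧ ∃ E' : Set (X × X),
    MeasurableSet E' ∧ (μ.prod μ).real (symmDiff E E') < ε ∧
    ∀ i j, i < hgt n → j < hgt n → L n i ×ˢ L n j ⊆ E' ∨ Disjoint (L n i ×ˢ L n j) E' := by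
  obtain ⟨N, hN⟩ := exists_pow_lt_of_lt_one hε (by norm_num : (1 / 4 : ℝ) < 1)
  obtain ⟨n, hn, E', h1, h2, h3⟩ := h.approx E hE ε hε (N + 1)
  refine ⟨n, by omega, lt_of_le_of_lt ?_ hN, E', h1, h2, h3⟩
  rw [← one_div_pow]
  exact pow_le_pow_of_le_one (by norm_num) (by norm_num) (by omega)

/-- A set invariant under `T × T` is invariant under `id × T`: it is nearly a union of rectangles
`L n i × L n j`, and by `off_diag` rectangles `(i, j)` and `(i, j + 1)` are both nearly full or both
nearly empty, apart from a proportion of rectangles controlled by the error of approximation. -/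
lemma inv_snd (h : ChaconTower μ T L) {E : Set (X × X)} (hE : MeasurableSet E)
    (hS : Prod.map T T ⁻¹' E =ᵐ[μ.prod μ] E) : Prod.map id T ⁻¹' E =ᵐ[μ.prod μ] E := by
  have hWE : MeasurableSet (Prod.map id T ⁻¹' E) := h.pres_snd.measurable hE
  have key : ∀ ε > 0, (μ.prod μ).real (symmDiff E (Prod.map id T ⁻¹' E)) ≤ 35 * ε := by
    intro ε hε
    obtain ⟨n, hn, hnε, E', hE'm, hEE', hE'⟩ := h.approx_small hE hε
    obtain ⟨k, hk⟩ : ∃ k, hgt n = k + 1 := by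
      have h1 := hgt_add_one n
      have h4 : 4 ^ 1 ≤ 4 ^ n := Nat.pow_le_pow_right (by norm_num) hn
      exact ⟨hgt n - 1, by omega⟩
    let s : Finset (ℕ × ℕ) := Finset.range (hgt n) ×ˢ Finset.range k
    have hs : ∀ p ∈ s, p.1 < hgt n ∧ p.2 + 1 < hgt n := by
      intro p hp
      simp only [s, Finset.mem_product, Finset.mem_range] at hp
      omega
    have hD : MeasurableSet (symmDiff E E') := hE.symmDiff hE'm
    have b1 := h.le_sum (n := n) (s := s) (fun p hp => ⟨(hs p hp).1, by have := hs p hp; omega⟩)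
      (hE.symmDiff hWE)
    have b2 := Finset.sum_le_sum fun p hp =>
      h.symmDiff_rect_le hE hS hE' (hs p hp).1 (hs p hp).2
    rw [← Finset.mul_sum, Finset.sum_add_distrib] at b2
    have b3 := h.sum_le (n := n) (s := s) (fun p hp => ⟨(hs p hp).1, by have := hs p hp; omega⟩) hD
    have b4 : ∑ p ∈ s, (μ.prod μ).real (symmDiff E E' ∩ L n p.1 ×ˢ L n (p.2 + 1)) ≤
        (μ.prod μ).real (symmDiff E E') := by
      let f : ℕ × ℕ ↪ ℕ × ℕ := ⟨fun p => (p.1, p.2 + 1), fun p q hpq => by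
        simp only [Prod.mk.injEq, Nat.add_right_cancel_iff] at hpq
        exact Prod.ext hpq.1 hpq.2⟩
      have := h.sum_le (n := n) (s := s.map f) (by
        intro p hp
        obtain ⟨q, hq, rfl⟩ := Finset.mem_map.1 hp
        exact hs q hq) hD
      rwa [Finset.sum_map] at this
    have b5 : 1 - s.card * (1 / 4 ^ n * (1 / 4 ^ n)) ≤ 3 * (1 / 4 ^ n : ℝ) := by
      have h1 : (k : ℝ) + 1 + 1 = 4 ^ n := by
        have := hgt_add_one n
        rw [hk] at this
        exact_mod_cast this
      have hp : (0:ℝ) < 1 / 4 ^ n := by positivity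
      have h2 : ((k : ℝ) + 1 + 1) * (1 / 4 ^ n) = 1 := by rw [h1]; field_simp
      simp only [s, Finset.card_product, Finset.card_range, hk]
      push_cast
      generalize (1 / 4 ^ n : ℝ) = r at *
      have h3 : (k : ℝ) * r = 1 - 2 * r := by linarith
      nlinarith
    linarith
  have h0 : (μ.prod μ).real (symmDiff E (Prod.map id T ⁻¹' E)) = 0 := by
    refine le_antisymm (le_of_forall_pos_le_add fun ε hε => ?_) measureReal_nonneg
    have := key (ε / 35) (by positivity)
    linarith
  rw [measureReal_eq_zero_iff, measure_symmDiff_eq_zero_iff] at h0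
  exact h0.symm

/-- Under invariance in each coordinate, all rectangles of a stage are equally charged; at a stage
where `E` is nearly a union of rectangles this forces measure zero or one. -/
lemma zero_one (h : ChaconTower μ T L) {E : Set (X × X)} (hE : MeasurableSet E)
    (h1 : Prod.map T id ⁻¹' E =ᵐ[μ.prod μ] E) (h2 : Prod.map id T ⁻¹' E =ᵐ[μ.prod μ] E) :
    (μ.prod μ).real E * (μ.prod μ).real Eᶜ = 0 := by
  set ν := μ.prod μ
  have key : ∀ ε > 0, ν.real E * ν.real Eᶜ ≤ 5 * ε := by
    intro ε hε
    obtain ⟨n, hn, hnε, E', hE'm, hEE', hE'⟩ := h.approx_small hE hε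
    have rows : ∀ i j, i < hgt n → j < hgt n →
        ν.real (E ∩ L n i ×ˢ L n j) = ν.real (E ∩ L n i ×ˢ L n 0) := by
      intro i j hi hj
      induction j with
      | zero => rfl
      | succ j ih =>
        rw [← ih (by omega)]
        exact transport h.pres_snd hE (h.meas_prod _ _ _) h2
          (Measure.set_prod_ae_eq Filter.EventuallyEq.rfl (h.step n j hj))
    have cols : ∀ i, i < hgt n →
        ν.real (E ∩ L n i ×ˢ L n 0) = ν.real (E ∩ L n 0 ×ˢ L n 0) := by
      intro i hi
      induction i with
      | zero => rfl
      | succ i ih =>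
        rw [← ih (by omega)]
        exact transport h.pres_fst hE (h.meas_prod _ _ _) h1
          (Measure.set_prod_ae_eq (h.step n i hi) Filter.EventuallyEq.rfl)
    set κ := ν.real (E ∩ L n 0 ×ˢ L n 0)
    have hE1 : ∀ i j, i < hgt n → j < hgt n → ν.real (E ∩ L n i ×ˢ L n j) = κ := by
      intro i j hi hj
      rw [rows i j hi hj, cols i hi]
    have hE2 : ∀ i j, i < hgt n → j < hgt n →
        ν.real (Eᶜ ∩ L n i ×ˢ L n j) = 1 / 4 ^ n * (1 / 4 ^ n) - κ := by
      intro i j hi hj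
      rw [← h.size_prod hi hj, ← hE1 i j hi hj, inter_comm E, inter_comm Eᶜ, ← sdiff_eq,
        ← measureReal_inter_add_sdiff (s := L n i ×ˢ L n j) hE, add_sub_cancel_left]
    have hpos : 0 < hgt n := by
      have h1 := hgt_add_one n
      have h4 : 4 ^ 1 ≤ 4 ^ n := Nat.pow_le_pow_right (by norm_num) hn
      omega
    have k0 : 0 ≤ κ := measureReal_nonneg
    have k1 : 0 ≤ 1 / 4 ^ n * (1 / 4 ^ n) - κ := by
      rw [← hE2 0 0 hpos hpos]; exact measureReal_nonneg
    let s : Finset (ℕ × ℕ) := Finset.range (hgt n) ×ˢ Finset.range (hgt n)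
    have hs : ∀ p ∈ s, p.1 < hgt n ∧ p.2 < hgt n := by
      intro p hp
      simpa only [s, Finset.mem_product, Finset.mem_range] using hp
    have c1 := h.le_sum hs hE
    have c2 := h.le_sum hs hE.compl
    have c3 := h.sum_le hs (hE.symmDiff hE'm)
    rw [Finset.sum_congr rfl fun p hp => hE1 _ _ (hs p hp).1 (hs p hp).2, Finset.sum_const,
      nsmul_eq_mul] at c1
    rw [Finset.sum_congr rfl fun p hp => hE2 _ _ (hs p hp).1 (hs p hp).2, Finset.sum_const,
      nsmul_eq_mul] at c2
    have c4 : (s.card : ℝ) * (κ * (1 / 4 ^ n * (1 / 4 ^ n) - κ)) ≤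
        1 / 4 ^ n * (1 / 4 ^ n) * ε := by
      have : ∑ p ∈ s, κ * (1 / 4 ^ n * (1 / 4 ^ n) - κ) ≤
          ∑ p ∈ s, 1 / 4 ^ n * (1 / 4 ^ n) * ν.real (symmDiff E E' ∩ L n p.1 ×ˢ L n p.2) := by
        refine Finset.sum_le_sum fun p hp => ?_
        have n1 : 0 ≤ ν.real (symmDiff E E' ∩ L n p.1 ×ˢ L n p.2) := measureReal_nonneg
        rcases hE' p.1 p.2 (hs p hp).1 (hs p hp).2 with ha | ha
        · have : 1 / 4 ^ n * (1 / 4 ^ n) - κ ≤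
              ν.real (symmDiff E E' ∩ L n p.1 ×ˢ L n p.2) := by
            rw [← hE2 _ _ (hs p hp).1 (hs p hp).2]
            exact measureReal_mono fun z hz => ⟨.inr ⟨ha hz.2, hz.1⟩, hz.2⟩
          exact mul_le_mul (by linarith) this k1 (by positivity)
        · have : κ ≤ ν.real (symmDiff E E' ∩ L n p.1 ×ˢ L n p.2) := by
            rw [← hE1 _ _ (hs p hp).1 (hs p hp).2]
            exact measureReal_mono fun z hz => ⟨.inl ⟨hz.1, disjoint_left.1 ha hz.2⟩, hz.2⟩
          rw [mul_comm κ]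
          exact mul_le_mul (by linarith) this k0 (by positivity)
      rw [Finset.sum_const, nsmul_eq_mul, ← Finset.mul_sum] at this
      refine this.trans (mul_le_mul_of_nonneg_left (c3.trans hEE'.le) (by positivity))
    have hcard : (s.card : ℝ) * (1 / 4 ^ n * (1 / 4 ^ n)) = (1 - 1 / 4 ^ n) ^ 2 := by
      have h1 : (hgt n : ℝ) = 4 ^ n - 1 := by
        have : (hgt n : ℝ) + 1 = 4 ^ n := by exact_mod_cast hgt_add_one n
        linarith
      simp only [s, Finset.card_product, Finset.card_range]
      push_cast
      rw [h1]
      field_simp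
    have r0 : (0:ℝ) < 1 / 4 ^ n := by positivity
    have r1 : (1 / 4 ^ n : ℝ) ≤ 1 := by
      rw [div_le_one (by positivity)]
      exact one_le_pow₀ (by norm_num)
    rw [hcard] at c1 c2
    have e1 : ν.real E ≤ 1 := measureReal_le_one
    have e2 : ν.real Eᶜ ≤ 1 := measureReal_le_one
    have e0 : 0 ≤ ν.real E := measureReal_nonneg
    have e0' : 0 ≤ ν.real Eᶜ := measureReal_nonneg
    have u0 : 0 ≤ (s.card : ℝ) * κ := mul_nonneg (Nat.cast_nonneg _) k0
    have v0 : 0 ≤ (s.card : ℝ) * (1 / 4 ^ n * (1 / 4 ^ n) - κ) :=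
      mul_nonneg (Nat.cast_nonneg _) k1
    have uv : (s.card : ℝ) * κ * (s.card * (1 / 4 ^ n * (1 / 4 ^ n) - κ)) ≤ ε := by
      calc (s.card : ℝ) * κ * (s.card * (1 / 4 ^ n * (1 / 4 ^ n) - κ))
          = s.card * (s.card * (κ * (1 / 4 ^ n * (1 / 4 ^ n) - κ))) := by ring
        _ ≤ s.card * (1 / 4 ^ n * (1 / 4 ^ n) * ε) :=
          mul_le_mul_of_nonneg_left c4 (Nat.cast_nonneg _)
        _ = (1 - 1 / 4 ^ n) ^ 2 * ε := by rw [← mul_assoc, hcard]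
        _ ≤ 1 * ε := by
          gcongr
          exact pow_le_one₀ (by linarith) (by linarith)
        _ = ε := one_mul ε
    generalize (s.card : ℝ) * κ = u at *
    generalize (s.card : ℝ) * (1 / 4 ^ n * (1 / 4 ^ n) - κ) = v at *
    have c1' : ν.real E ≤ u + 2 * ε := by nlinarith
    have c2' : ν.real Eᶜ ≤ v + 2 * ε := by nlinarith
    -- `u` and `v` exceed the measures of `E` and its complement minus `2ε`, and `u * v ≤ ε`.
    rcases le_total u (ν.real E) with hu | hu
    · nlinarith
    · rcases le_total v (ν.real Eᶜ) with hv | hv <;> nlinarith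
  refine le_antisymm (le_of_forall_pos_le_add fun ε hε => ?_) (by positivity)
  have := key (ε / 5) (by positivity)
  linarith

theorem ergodic_prod (h : ChaconTower μ T L) : Ergodic (Prod.map T T) (μ.prod μ) := by
  refine ⟨h.pres.prod h.pres, ⟨fun E hE hSE => ?_⟩⟩
  have hS : Prod.map T T ⁻¹' E =ᵐ[μ.prod μ] E := by rw [hSE]; exact Filter.EventuallyEq.rfl
  have h2 := h.inv_snd hE hS
  have h1 : Prod.map T id ⁻¹' E =ᵐ[μ.prod μ] E := by
    have e : Prod.map T id ⁻¹' (Prod.map id T ⁻¹' E) = Prod.map T T ⁻¹' E := by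
      rw [← preimage_comp, Prod.map_comp_map]; rfl
    have := h.pres_fst.quasiMeasurePreserving.preimage_ae_eq h2
    rw [e, hSE] at this
    exact this.symm
  rw [Filter.eventuallyConst_set']
  rcases mul_eq_zero.1 (h.zero_one hE h1 h2) with h0 | h0
  · left
    rw [measureReal_eq_zero_iff] at h0
    exact ae_eq_empty.2 h0
  · right
    rw [measureReal_eq_zero_iff] at h0
    exact ae_eq_univ.2 h0

end ChaconTower

/-! ### The towers of the limit map -/

/-- Sets in the square of the torus which are unions of products of dyadic squares of one stage. -/
def dyadicAlgebra : Set (Set (T2 × T2)) :=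
  {E | ∃ n, ∀ z w : T2 × T2, cell n z.1 = cell n w.1 → cell n z.2 = cell n w.2 → (z ∈ E ↔ w ∈ E)}

lemma cell_eq_of_le {n m : ℕ} (hnm : n ≤ m) {x y : T2} (h : cell m x = cell m y) :
    cell n x = cell n y := by
  induction m, hnm using Nat.le_induction with
  | base => exact h
  | succ m _ ih => exact ih (cell_eq_of_cell_succ_eq h)

lemma isSetAlgebra_dyadicAlgebra : IsSetAlgebra dyadicAlgebra where
  empty_mem := ⟨0, fun _ _ _ _ => Iff.rfl⟩
  compl_mem := by
    rintro E ⟨n, hn⟩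
    exact ⟨n, fun z w h1 h2 => not_congr (hn z w h1 h2)⟩
  union_mem := by
    rintro E F ⟨n, hn⟩ ⟨m, hm⟩
    exact ⟨max n m, fun z w h1 h2 => or_congr
      (hn z w (cell_eq_of_le (le_max_left _ _) h1) (cell_eq_of_le (le_max_left _ _) h2))
      (hm z w (cell_eq_of_le (le_max_right _ _) h1) (cell_eq_of_le (le_max_right _ _) h2))⟩

lemma measurableSet_of_mem_dyadicAlgebra {E : Set (T2 × T2)} (hE : E ∈ dyadicAlgebra) :
    MeasurableSet E := by
  obtain ⟨n, hn⟩ := hE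
  let f : T2 × T2 → (ℕ × ℕ) × (ℕ × ℕ) := fun z => (cell n z.1, cell n z.2)
  have hf : Measurable f :=
    ((measurable_cell n).comp measurable_fst).prodMk ((measurable_cell n).comp measurable_snd)
  have : E = f ⁻¹' (f '' E) := by
    refine Subset.antisymm (subset_preimage_image f E) ?_
    rintro z ⟨w, hw, hwz⟩
    simp only [f, Prod.mk.injEq] at hwz
    exact (hn w z hwz.1 hwz.2).1 hw
  rw [this]
  exact hf (Set.to_countable _).measurableSet

lemma tendsto_cell1 (x : AddCircle (1:ℝ)) :
    Tendsto (fun n : ℕ => (cell1 n x : ℝ) / 2 ^ n) atTop (nhds (rep x)) := by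
  have h0 : Tendsto (fun n : ℕ => rep x - (1 / 2 : ℝ) ^ n) atTop (nhds (rep x)) := by
    simpa using tendsto_const_nhds.sub
      (tendsto_pow_atTop_nhds_zero_of_lt_one (r := (1 / 2 : ℝ)) (by norm_num) (by norm_num))
  refine tendsto_of_tendsto_of_tendsto_of_le_of_le h0 tendsto_const_nhds (fun n => ?_) fun n => ?_
  all_goals
    have hp : (0:ℝ) < 2 ^ n := by positivity
    obtain ⟨h1, h2⟩ := cell1_eq_iff.1 (rfl : cell1 n x = cell1 n x)
  · show rep x - (1 / 2 : ℝ) ^ n ≤ cell1 n x / 2 ^ n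
    rw [le_div_iff₀ hp, sub_mul, one_div_pow, one_div_mul_cancel hp.ne']
    linarith
  · show (cell1 n x : ℝ) / 2 ^ n ≤ rep x
    rw [div_le_iff₀ hp]
    linarith

lemma measurable_of_cell {α : Type*} [MeasurableSpace α] {f : α → T2}
    (hf : ∀ n, Measurable fun a => cell n (f a)) : Measurable f := by
  have hc : Measurable fun t : ℝ => (t : AddCircle (1:ℝ)) := AddCircle.measurable_mk'
  have hc1 : Measurable fun a => rep (f a).1 := by
    refine measurable_of_tendsto_metrizable (f := fun n a => (cell1 n (f a).1 : ℝ) / 2 ^ n)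
      (fun n => ?_) (tendsto_pi_nhds.2 fun a => tendsto_cell1 _)
    exact (measurable_from_top.comp (measurable_fst.comp (hf n))).div_const _
  have hc2 : Measurable fun a => rep (f a).2 := by
    refine measurable_of_tendsto_metrizable (f := fun n a => (cell1 n (f a).2 : ℝ) / 2 ^ n)
      (fun n => ?_) (tendsto_pi_nhds.2 fun a => tendsto_cell1 _)
    exact (measurable_from_top.comp (measurable_snd.comp (hf n))).div_const _
  have : f = fun a => ((rep (f a).1 : AddCircle (1:ℝ)), (rep (f a).2 : AddCircle (1:ℝ))) := by
    funext a; rw [coe_rep, coe_rep]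
  rw [this]
  exact (hc.comp hc1).prodMk (hc.comp hc2)

lemma generateFrom_dyadicAlgebra :
    (inferInstance : MeasurableSpace (T2 × T2)) = MeasurableSpace.generateFrom dyadicAlgebra := by
  refine le_antisymm ?_ (MeasurableSpace.generateFrom_le fun E hE =>
    measurableSet_of_mem_dyadicAlgebra hE)
  have h1 : Measurable[MeasurableSpace.generateFrom dyadicAlgebra] (Prod.fst : T2 × T2 → T2) := by
    refine @measurable_of_cell _ (MeasurableSpace.generateFrom dyadicAlgebra) _ fun n => ?_
    refine @measurable_to_countable' _ _ _ _ (MeasurableSpace.generateFrom dyadicAlgebra) _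
      fun p => MeasurableSpace.measurableSet_generateFrom ⟨n, fun z w hz _ => ?_⟩
    simp only [mem_preimage, mem_singleton_iff, hz]
  have h2 : Measurable[MeasurableSpace.generateFrom dyadicAlgebra] (Prod.snd : T2 × T2 → T2) := by
    refine @measurable_of_cell _ (MeasurableSpace.generateFrom dyadicAlgebra) _ fun n => ?_
    refine @measurable_to_countable' _ _ _ _ (MeasurableSpace.generateFrom dyadicAlgebra) _
      fun p => MeasurableSpace.measurableSet_generateFrom ⟨n, fun z w _ hz => ?_⟩
    simp only [mem_preimage, mem_singleton_iff, hz]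
  exact sup_le h1.comap_le h2.comap_le

lemma cell_of_succ {n : ℕ} {p q : ℕ × ℕ} {x : T2} (hx : cell (n + 1) x = q)
    (h1 : q.1 / 2 = p.1) (h2 : q.2 / 2 = p.2) : cell n x = p := by
  subst hx
  exact Prod.ext ((cell1_succ_div n x.1).symm.trans h1) ((cell1_succ_div n x.2).symm.trans h2)

instance isProbabilityMeasure_T2 : IsProbabilityMeasure (volume : Measure T2) := by
  have : IsProbabilityMeasure (volume : Measure (AddCircle (1:ℝ))) :=
    ⟨by simp [AddCircle.measure_univ]⟩
  rw [Measure.volume_eq_prod]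
  infer_instance

lemma chaconTower {U : T2 → T2} (hU : IsAutomorphism U)
    (hlim : ∀ᵐ x ∂(volume : Measure T2), ∃ N : ℕ, ∀ n, N ≤ n → chaconU n x = U x) :
    ChaconTower (volume : Measure T2) U (fun n i => {x | cell n x = tpos n i}) where
  pres := by
    obtain ⟨hm, V, -, -, -, h⟩ := hU
    exact ⟨hm, Measure.ext fun A hA => by rw [Measure.map_apply hm hA, h A hA]⟩
  meas n i := measurable_cell n (measurableSet_singleton _)
  size n i hi := by
    obtain ⟨h1, h2, -⟩ := tpos_spec n i hi
    rw [measureReal_def, volume_cell h1 h2, ENNReal.toReal_ofReal (by positivity)]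
  disj n i j hi hj hij := disjoint_left.2 fun x hx hy =>
    hij (tpos_inj n i hi j hj (hx.symm.trans hy))
  step n i hi := by
    have hn : 1 ≤ n := by
      rcases Nat.eq_zero_or_pos n with rfl | h
      · simp [hgt] at hi
      · exact h
    obtain ⟨hm, V, -, -, -, h⟩ := hU
    obtain ⟨h1, h2, -⟩ := tpos_spec n i (by omega)
    obtain ⟨h3, h4, -⟩ := tpos_spec n (i + 1) hi
    symm
    refine ae_eq_of_ae_subset_of_measure_ge ?_ ?_
      (measurable_cell n (measurableSet_singleton _)).nullMeasurableSet (measure_ne_top _ _)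
    · filter_upwards [hlim] with x ⟨N, hN⟩ hx
      show cell n (U x) = tpos n (i + 1)
      rw [← hN (max N n) (le_max_left _ _)]
      exact cell_chaconU hn (le_max_right _ _) hi hx
    · exact ((h _ (measurable_cell n (measurableSet_singleton (tpos n (i + 1))))).trans <|
        (volume_cell h3 h4).trans (volume_cell h1 h2).symm).le
  fst_sub n i hi x hx := cell_of_succ (hx.trans (tpos_ul hi)) (by simp) (by simp; omega)
  snd_sub n i hi x hx := cell_of_succ (hx.trans (tpos_ur hi)) (by simp; omega) (by simp; omega)
  trd_sub n i hi x hx := cell_of_succ (hx.trans (tpos_ll hi)) (by simp) (by simp)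
  approx E hE ε hε N := by
    obtain ⟨E', hE'm, hE'⟩ := (Measure.MeasureDense.of_generateFrom_isSetAlgebra_finite
      (μ := (volume : Measure T2).prod (volume : Measure T2))
      isSetAlgebra_dyadicAlgebra generateFrom_dyadicAlgebra).approx E hE (measure_ne_top _ _) ε hε
    obtain ⟨n, hn⟩ := id hE'm
    refine ⟨max N n, le_max_left _ _, E', measurableSet_of_mem_dyadicAlgebra hE'm, ?_, ?_⟩
    · rw [measureReal_def]
      exact (ENNReal.lt_ofReal_iff_toReal_lt (measure_ne_top _ _)).1 hE'
    · intro i j _ _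
      by_cases hd : Disjoint ({x | cell (max N n) x = tpos (max N n) i} ×ˢ
          {x | cell (max N n) x = tpos (max N n) j}) E'
      · exact .inr hd
      · obtain ⟨z, hz, hzE⟩ := Set.not_disjoint_iff.1 hd
        refine .inl fun w hw => (hn z w ?_ ?_).1 hzE
        · exact cell_eq_of_le (le_max_right _ _) (hz.1.trans hw.1.symm)
        · exact cell_eq_of_le (le_max_right _ _) (hz.2.trans hw.2.symm)

/-! ### From ergodicity of the product to weak mixing -/

/-- Mean ergodic theorem, tested against indicators. -/
lemma tendsto_average_inter {Y : Type*} [MeasurableSpace Y] {ν : Measure Y}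
    [IsProbabilityMeasure ν] {S : Y → Y} (hS : Ergodic S ν) {P Q : Set Y}
    (hP : MeasurableSet P) (hQ : MeasurableSet Q) :
    Tendsto (fun n : ℕ => (n : ℝ)⁻¹ * ∑ j ∈ Finset.range n, ν.real (S^[j] ⁻¹' P ∩ Q)) atTop
      (nhds (ν.real P * ν.real Q)) := by
  have hmp : MeasurePreserving S ν ν := hS.toMeasurePreserving
  let K : Lp ℝ 2 ν →ₗᵢ[ℝ] Lp ℝ 2 ν := Lp.compMeasurePreservingₗᵢ ℝ S hmp
  let f : Lp ℝ 2 ν →L[ℝ] Lp ℝ 2 ν := K.toContinuousLinearMap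
  let ι : ∀ R : Set Y, MeasurableSet R → Lp ℝ 2 ν := fun R hR =>
    indicatorConstLp 2 hR (measure_ne_top ν R) (1 : ℝ)
  have hιι : ∀ (R R' : Set Y) (hR : MeasurableSet R) (hR' : MeasurableSet R'),
      inner ℝ (ι R hR) (ι R' hR') = ν.real (R ∩ R') := fun R R' hR hR' =>
    L2.real_inner_indicatorConstLp_one_indicatorConstLp_one hR hR'
  have hiter : ∀ j, f^[j] (ι P hP) = ι (S^[j] ⁻¹' P) ((hmp.iterate j).measurable hP) := by
    intro j
    induction j with
    | zero => rfl
    | succ j ih =>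
      rw [Function.iterate_succ_apply', ih]
      exact Lp.indicatorConstLp_compMeasurePreserving _ _ _ hmp
  have hlim := f.tendsto_birkhoffAverage_orthogonalProjection K.norm_toContinuousLinearMap_le
    (ι P hP)
  set g := (f.eqLocus (1 : Lp ℝ 2 ν →L[ℝ] Lp ℝ 2 ν)).orthogonalProjectionOnto (ι P hP) with hg
  -- The limit is invariant, hence constant.
  have hgf : f (g : Lp ℝ 2 ν) = g := g.2
  have hgS : ((g : Lp ℝ 2 ν) : Y → ℝ) ∘ S =ᵐ[ν] ((g : Lp ℝ 2 ν) : Y → ℝ) := by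
    refine (Lp.coeFn_compMeasurePreserving (g : Lp ℝ 2 ν) hmp).symm.trans ?_
    exact Filter.EventuallyEq.of_eq (congrArg (fun u : Lp ℝ 2 ν => (u : Y → ℝ)) hgf)
  obtain ⟨c, hc⟩ := hS.ae_eq_const_of_ae_eq_comp_ae (Lp.aestronglyMeasurable _) hgS
  have hav : ∀ (R : Set Y) (hR : MeasurableSet R),
      Tendsto (fun n : ℕ => (n : ℝ)⁻¹ * ∑ j ∈ Finset.range n, ν.real (S^[j] ⁻¹' P ∩ R)) atTop
      (nhds (c * ν.real R)) := by
    intro R hR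
    have h1 : Tendsto (fun n => inner ℝ (ι R hR) (birkhoffAverage ℝ f _root_.id n (ι P hP))) atTop
        (nhds (inner ℝ (ι R hR) (g : Lp ℝ 2 ν))) := tendsto_const_nhds.inner hlim
    have h2 : inner ℝ (ι R hR) (g : Lp ℝ 2 ν) = c * ν.real R := by
      rw [L2.inner_indicatorConstLp_one,
        setIntegral_congr_ae (g := fun _ => c) hR (hc.mono fun x hx _ => hx)]
      simp [mul_comm]
    rw [h2] at h1
    refine h1.congr fun n => ?_
    rw [birkhoffAverage, birkhoffSum, inner_smul_right, inner_sum]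
    congr 1
    refine Finset.sum_congr rfl fun j _ => ?_
    rw [id, hiter, hιι, inter_comm]
  -- Testing against the constant function one identifies the constant.
  have hcP : c = ν.real P := by
    have h1 := hav univ MeasurableSet.univ
    simp only [inter_univ, probReal_univ, mul_one] at h1
    refine tendsto_nhds_unique h1 (tendsto_const_nhds.congr' ?_)
    filter_upwards [eventually_gt_atTop 0] with n hn
    rw [Finset.sum_congr rfl fun j _ =>
      (hmp.iterate j).measureReal_preimage hP.nullMeasurableSet]
    have : (n : ℝ) ≠ 0 := by positivity
    simp [this]
  rw [← hcP]
  exact hav Q hQ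

/-- Ergodicity of `T × T` applied to `(A × A, B × B)` and `(A × X, B × X)` gives the averages of
the squares and of the first powers of `μ (T⁻ʲ A ∩ B)`. -/
lemma tendsto_of_ergodic_prod {X : Type*} [MeasurableSpace X] {μ : Measure X}
    [IsProbabilityMeasure μ] {T : X → X} (h : Ergodic (Prod.map T T) (μ.prod μ)) {A B : Set X}
    (hA : MeasurableSet A) (hB : MeasurableSet B) :
    Tendsto (fun n : ℕ => (1 / n : ℝ) * ∑ j ∈ Finset.range n,
      (μ.real (T^[j] ⁻¹' A ∩ B) - μ.real A * μ.real B) ^ 2) atTop (nhds 0) := by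
  have h2 := tendsto_average_inter h (hA.prod hA) (hB.prod hB)
  have h1 := tendsto_average_inter h (hA.prod MeasurableSet.univ) (hB.prod MeasurableSet.univ)
  simp only [Prod.map_iterate, preimage_prod_map_prod, preimage_univ, prod_inter_prod,
    measureReal_prod_prod, inter_univ, probReal_univ, mul_one] at h1 h2
  set c := μ.real A * μ.real B
  have h3 := (h2.sub (h1.const_mul (2 * c))).add_const (c ^ 2)
  rw [show μ.real A * μ.real A * (μ.real B * μ.real B) - 2 * c * c + c ^ 2 = 0 by
    simp only [c]; ring] at h3
  refine h3.congr' ?_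
  filter_upwards [eventually_gt_atTop 0] with n hn
  have hn' : (n : ℝ) ≠ 0 := by positivity
  have : ∀ j, (μ.real (T^[j] ⁻¹' A ∩ B) - c) ^ 2 =
      μ.real (T^[j] ⁻¹' A ∩ B) * μ.real (T^[j] ⁻¹' A ∩ B) -
        2 * c * μ.real (T^[j] ⁻¹' A ∩ B) + c ^ 2 := fun j => by ring
  simp only [this, Finset.sum_add_distrib, Finset.sum_sub_distrib, ← Finset.mul_sum,
    Finset.sum_const, Finset.card_range, nsmul_eq_mul]
  field_simp
/-- The a.e. limit `U` of the Chacon-type maps is weakly mixing. -/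
theorem chacon_weakly_mixing (U : T2 → T2)
    (hU : IsAutomorphism U)
    (hlim : ∀ᵐ x ∂(volume : Measure T2), ∃ N : ℕ, ∀ n, N ≤ n → chaconU n x = U x) :
    ∀ A B : Set T2, MeasurableSet A → MeasurableSet B →
      Tendsto
        (fun n : ℕ => (1 / n : ℝ) *
          ∑ j ∈ Finset.range n,
            ((volume (U^[j] ⁻¹' A ∩ B)).toReal - (volume A).toReal * (volume B).toReal) ^ 2)
        atTop (nhds 0) := by
  intro A B hA hB
  exact tendsto_of_ergodic_prod (chaconTower hU hlim).ergodic_prod hA hB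

end
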